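/- Fix an integer t ≥ 1 and apply the construction in the context with f = χ_t, M = 3·2^(t+1), ν = 1, a = (2^(t+1)−3)², and b = 3·2^(t+2), obtaining the sequence ξ_t(n). Then ξ_t(n) / [ (sin(π/2^t)/(2^t · √(3π))) · (3·2^t/π)^(2n+2) · 2^(2n+1) · n! · √n / (3·2^(t+2))^n · e^(π²/(3·2^(t+1))) ] → 1 as n → ∞. -/

import Mathlib

/-- The Fourier coefficient `G_f^{(ν)}(k)` of a function `f : ℤ → ℝ` of period `M`. -/
noncomputable def Gf (M : ℕ) (f : ℤ → ℝ) (ν : ℕ) (k : ℕ) : ℝ :=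
  if ν = 0 then
    (2 / Real.sqrt M) * ∑ m ∈ Finset.range M, f m * Real.sin (2 * Real.pi * m * k / M)
  else
    (2 / Real.sqrt M) * ∑ m ∈ Finset.range M, f m * Real.cos (2 * Real.pi * m * k / M)

/-- `C_n = (−1)^(n+1) (M^(2n+ν)/(2n+ν+1)) ∑_{m=1}^M f(m) B_{2n+ν+1}(m/M)`. -/
noncomputable def Cf (M : ℕ) (f : ℤ → ℝ) (ν : ℕ) (n : ℕ) : ℝ :=
  (-1) ^ (n + 1) * ((M : ℝ) ^ (2 * n + ν) / (2 * n + ν + 1)) *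
    ∑ m ∈ Finset.Icc 1 M,
      f m * (((Polynomial.bernoulli (2 * n + ν + 1)).eval ((m : ℚ) / (M : ℚ)) : ℚ) : ℝ)

/-- `D_n = b^(−n) ∑_{k=0}^n C(n,k) a^(n−k) C_k`. -/
noncomputable def Df (M : ℕ) (f : ℤ → ℝ) (ν a b : ℕ) (n : ℕ) : ℝ :=
  ((b : ℝ) ^ n)⁻¹ *
    ∑ k ∈ Finset.range (n + 1), (n.choose k : ℝ) * (a : ℝ) ^ (n - k) * Cf M f ν k

/-- The unsigned Stirling number of the first kind `s(n,j)`: the coefficient of `X^j`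
in `X (X+1) (X+2) ⋯ (X+n−1)`. -/
noncomputable def stirling1 (n j : ℕ) : ℝ :=
  (∏ i ∈ Finset.range n, (Polynomial.X + Polynomial.C (i : ℝ))).coeff j

/-- `ξ(0) = D_0` and `ξ(n) = (1/n!) ∑_{m=0}^{n−1} s(n, n−m) D_{n−m}` for `n ≥ 1`. -/
noncomputable def xif (M : ℕ) (f : ℤ → ℝ) (ν a b : ℕ) : ℕ → ℝ
  | 0 => Df M f ν a b 0
  | n + 1 => (1 / ((n + 1).factorial : ℝ)) *
      ∑ m ∈ Finset.range (n + 1), stirling1 (n + 1) (n + 1 - m) * Df M f ν a b (n + 1 - m)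

/-- The periodic function `χ_t` of period `3·2^(t+1)` from the strange identity for the
Kontsevich–Zagier series of the torus knot `T(3, 2^t)`. -/
noncomputable def chiT (t : ℕ) (n : ℤ) : ℝ :=
  if n % (3 * 2 ^ (t + 1)) = (2 ^ (t + 1) - 3) % (3 * 2 ^ (t + 1)) ∨
      n % (3 * 2 ^ (t + 1)) = (2 ^ (t + 2) + 3) % (3 * 2 ^ (t + 1)) then -(1 / 2)
  else if n % (3 * 2 ^ (t + 1)) = (2 ^ (t + 1) + 3) % (3 * 2 ^ (t + 1)) ∨
      n % (3 * 2 ^ (t + 1)) = (2 ^ (t + 2) - 3) % (3 * 2 ^ (t + 1)) then 1 / 2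
  else 0

/-!
The cosine series of the Bernoulli polynomials gives
`∑ₖ G(k) / k ^ (2n + 2) = -(2π)² / (M √M) * C_n / ((2n + 1)! (M / 2π) ^ (2n))`, and the term `k = 1`
dominates as `n → ∞`. Hence `C_n ~ γ (2n + 1)! S ^ n` with `S = (M / 2π)²`.

Both transforms `C ↦ D ↦ n! ξ(n)` replace `C n` by `∑ᵢ W n i * C (n - i)`. Stepping back from `n`
to `n - i` divides the main term by about `(4 n² S) ^ i`. The binomial weights are `O(n ^ i)`, so
only `i = 0` survives and `D` has the growth of `C` with `S / b` in place of `S`. The Stirling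
weights satisfy `s(n, n - i) ~ n ^ (2i) / (2 ^ i i!)`, so every `i` contributes and, for this new
`S`, the limits sum to `exp (1 / (8 S))`. Wallis' product turns
`(2n + 1)! / n!` into `n! 4 ^ n √n * 2 / √π`.
-/

section

open Filter Topology Real
open scoped Nat

section DominatedConvergence

theorem tendsto_sum_of_dominated_convergence {α β E : Type*} [NormedAddCommGroup E]
    [CompleteSpace E] {l : Filter α} {s : α → Finset β} {f : α → β → E} {g : β → E}
    {bound : β → ℝ} (hs : Tendsto s l atTop) (hbound : Summable bound)
    (hfg : ∀ k, Tendsto (f · k) l (𝓝 (g k)))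
    (hf : ∀ᶠ n in l, ∀ k ∈ s n, ‖f n k‖ ≤ bound k) :
    Tendsto (fun n => ∑ k ∈ s n, f n k) l (𝓝 (∑' k, g k)) := by
  classical
  rcases l.eq_or_neBot with rfl | _
  · exact tendsto_bot
  have eventually_mem (k : β) : ∀ᶠ n in l, k ∈ s n :=
    (hs.eventually_ge_atTop {k}).mono fun n hn => hn (Finset.mem_singleton_self k)
  have bound_nonneg (k : β) : 0 ≤ bound k := by
    obtain ⟨n, hn, hk⟩ := (hf.and (eventually_mem k)).exists
    exact (norm_nonneg _).trans (hn k hk)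
  have tsum_eq (n : α) : ∑' k, (if k ∈ s n then f n k else 0) = ∑ k ∈ s n, f n k := by
    rw [tsum_eq_sum fun k hk => if_neg hk]
    exact Finset.sum_congr rfl fun k hk => if_pos hk
  simp_rw [← tsum_eq]
  refine tendsto_tsum_of_dominated_convergence hbound (fun k => ?_) ?_
  · exact (hfg k).congr' ((eventually_mem k).mono fun n hn => (if_pos hn).symm)
  · filter_upwards [hf] with n hn k
    split_ifs with hk
    · exact hn k hk
    · simpa using bound_nonneg k

theorem tendsto_tsum_div_pow_of_bounded {g : ℕ → ℝ} {B : ℝ} (hg : ∀ k, |g k| ≤ B) :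
    Tendsto (fun n : ℕ => ∑' k : ℕ, g k / (k : ℝ) ^ (n + 2)) atTop (𝓝 (g 1)) := by
  have term_bound (n k : ℕ) : ‖g k / (k : ℝ) ^ (n + 2)‖ ≤ B * (1 / (k : ℝ) ^ 2) := by
    rcases k.eq_zero_or_pos with rfl | hk
    · simp
    have hk1 : (1 : ℝ) ≤ k := mod_cast hk
    rw [Real.norm_eq_abs, abs_div, abs_of_nonneg (by positivity : (0 : ℝ) ≤ k ^ (n + 2)),
      div_eq_mul_one_div]
    gcongr
    · exact (abs_nonneg _).trans (hg 0)
    · exact hg k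
    · lia
  have term_tendsto (k : ℕ) :
      Tendsto (fun n : ℕ => g k / (k : ℝ) ^ (n + 2)) atTop (𝓝 (if k = 1 then g 1 else 0)) := by
    rcases lt_trichotomy k 1 with hk | rfl | hk
    · obtain rfl : k = 0 := by lia
      simp
    · simp
    · rw [if_neg hk.ne']
      exact ((tendsto_pow_atTop_atTop_of_one_lt (mod_cast hk : (1 : ℝ) < k)).comp
        (tendsto_add_atTop_nat 2)).const_div_atTop (g k)
  rw [← tsum_ite_eq 1 fun _ => g 1]
  exact tendsto_tsum_of_dominated_convergence
    ((Real.summable_one_div_nat_pow.2 one_lt_two).mul_left B) term_tendsto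
    (.of_forall fun n k => term_bound n k)

end DominatedConvergence

section Factorials

theorem descFactorial_succ_succ_eq_add (n k : ℕ) :
    (n + 1).descFactorial (k + 1) = n.descFactorial (k + 1) + (k + 1) * n.descFactorial k := by
  simp only [Nat.descFactorial_eq_factorial_mul_choose, Nat.choose_succ_succ', Nat.factorial_succ]
  ring

theorem add_one_pow_le_exp_one_mul_pow {n k : ℕ} (hk : k ≤ n) :
    ((n + 1 : ℕ) : ℝ) ^ k ≤ exp 1 * (n : ℝ) ^ k := by
  rcases n.eq_zero_or_pos with rfl | hn
  · simp [Nat.le_zero.1 hk]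
  have hn0 : (0 : ℝ) < n := mod_cast hn
  have succ_le : ((n + 1 : ℕ) : ℝ) ≤ exp (1 / n) * n := by
    calc ((n + 1 : ℕ) : ℝ) = (1 / n + 1) * n := by push_cast; field_simp; ring
      _ ≤ exp (1 / n) * n := by gcongr; exact add_one_le_exp _
  calc ((n + 1 : ℕ) : ℝ) ^ k ≤ (exp (1 / n) * n) ^ k := by gcongr
    _ = exp (k / n) * (n : ℝ) ^ k := by rw [mul_pow, ← exp_nat_mul, mul_one_div]
    _ ≤ exp 1 * (n : ℝ) ^ k := by
      gcongr
      exact (div_le_one hn0).2 (mod_cast hk)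

theorem pow_le_exp_mul_descFactorial {n k : ℕ} (hk : k ≤ n) :
    (n : ℝ) ^ k ≤ exp k * n.descFactorial k := by
  induction k generalizing n with
  | zero => simp
  | succ k ih =>
    obtain ⟨n, rfl⟩ := Nat.exists_eq_add_of_le' (Nat.one_le_of_lt hk)
    have hkn : k ≤ n := by lia
    calc ((n + 1 : ℕ) : ℝ) ^ (k + 1)
        ≤ (n + 1 : ℕ) * (exp 1 * (n : ℝ) ^ k) := by
          rw [pow_succ']
          gcongr
          exact add_one_pow_le_exp_one_mul_pow hkn
      _ ≤ (n + 1 : ℕ) * (exp 1 * (exp k * n.descFactorial k)) := by gcongr; exact ih hkn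
      _ = exp (k + 1 : ℕ) * (n + 1).descFactorial (k + 1) := by
          rw [Nat.succ_descFactorial_succ, Nat.cast_succ k, exp_add]
          push_cast
          ring

theorem tendsto_descFactorial_div_pow {c : ℕ} (hc : c ≠ 0) (d k : ℕ) :
    Tendsto (fun n : ℕ => ((c * n + d).descFactorial k : ℝ) / (n : ℝ) ^ k) atTop
      (𝓝 ((c : ℝ) ^ k)) := by
  have affine_tendsto : Tendsto (fun n : ℕ => c * n + d) atTop atTop :=
    tendsto_atTop_mono (fun n => (Nat.le_mul_of_pos_left n hc.bot_lt).trans (Nat.le_add_right _ d))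
      tendsto_id
  have ratio_tendsto :
      Tendsto (fun n : ℕ => ((c * n + d : ℕ) : ℝ) / n) atTop (𝓝 c) := by
    have h : Tendsto (fun n : ℕ => (c : ℝ) + d / n) atTop (𝓝 (c + 0)) :=
      tendsto_const_nhds.add (tendsto_const_div_atTop_nhds_zero_nat (d : ℝ))
    rw [add_zero] at h
    refine h.congr' ?_
    filter_upwards [eventually_ne_atTop 0] with n hn
    push_cast
    field_simp
  refine (((isEquivalent_descFactorial k).comp_tendsto affine_tendsto).div
    (Asymptotics.IsEquivalent.refl (u := fun n : ℕ => (n : ℝ) ^ k))).symm.tendsto_nhds ?_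
  exact (ratio_tendsto.pow k).congr fun n => div_pow _ _ k

theorem tendsto_factorial_two_mul_add_one_div :
    Tendsto (fun n : ℕ => ((2 * n + 1)! : ℝ) / ((n ! : ℝ) ^ 2 * 4 ^ n * √n)) atTop
      (𝓝 (2 / √π)) := by
  have square_tendsto :
      Tendsto (fun n : ℕ => (2 + 1 / (n : ℝ)) / Wallis.W n) atTop (𝓝 (2 ^ 2 / π)) := by
    have h := (tendsto_one_div_atTop_nhds_zero_nat (𝕜 := ℝ)).const_add 2 |>.div
      Wallis.tendsto_W_nhds_pi_div_two (by positivity)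
    rwa [show (2 + 0) / (π / 2) = 2 ^ 2 / π by field_simp; norm_num] at h
  have sqrt_tendsto := square_tendsto.sqrt
  rw [sqrt_div (by positivity), sqrt_sq zero_le_two] at sqrt_tendsto
  refine sqrt_tendsto.congr' ?_
  filter_upwards [eventually_ne_atTop 0] with n hn
  rw [sqrt_eq_iff_mul_self_eq_of_pos (by positivity), Wallis.W_eq_factorial_ratio,
    Nat.factorial_succ]
  have sqrt_sq : √(n : ℝ) ^ 2 = n := sq_sqrt n.cast_nonneg
  have four_pow : (4 : ℝ) ^ n = (2 ^ n) ^ 2 := by rw [pow_right_comm]; norm_num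
  push_cast
  field_simp
  rw [sqrt_sq, four_pow]
  ring

end Factorials

section StirlingNumbers

theorem stirling1_eq_stirlingFirst (n j : ℕ) : stirling1 n j = Nat.stirlingFirst n j := by
  induction n generalizing j with
  | zero => cases j <;> simp [stirling1, Polynomial.coeff_one]
  | succ n ih =>
    have coeff_succ (j : ℕ) :
        stirling1 (n + 1) (j + 1) = stirling1 n j + stirling1 n (j + 1) * n := by
      simp only [stirling1, Finset.prod_range_succ, mul_add, Polynomial.coeff_add,
        Polynomial.coeff_mul_X, Polynomial.coeff_mul_C]
    have coeff_zero : stirling1 (n + 1) 0 = stirling1 n 0 * n := by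
      simp only [stirling1, Finset.prod_range_succ, mul_add, Polynomial.coeff_add,
        Polynomial.coeff_mul_X_zero, Polynomial.coeff_mul_C, zero_add]
    cases j with
    | zero => cases n <;> simp [coeff_zero, ih]
    | succ j =>
      rw [coeff_succ, ih, ih, Nat.stirlingFirst_succ_succ]
      push_cast
      ring

theorem two_pow_mul_factorial_mul_stirlingFirst_succ (m k : ℕ) :
    2 ^ (m + 1) * (m + 1)! * Nat.stirlingFirst (k + 1 + (m + 1)) (k + 1) =
      2 ^ (m + 1) * (m + 1)! * Nat.stirlingFirst (k + (m + 1)) k +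
        2 * (m + 1) * (k + (m + 1)) * (2 ^ m * m ! * Nat.stirlingFirst (k + 1 + m) (k + 1)) := by
  rw [show k + 1 + (m + 1) = k + 1 + m + 1 by ring, Nat.stirlingFirst_succ_succ,
    show k + (m + 1) = k + 1 + m by ring, Nat.factorial_succ]
  ring

theorem two_pow_mul_factorial_mul_stirlingFirst_le_pow (m k : ℕ) :
    2 ^ m * m ! * Nat.stirlingFirst (k + m) k ≤ (k + m) ^ (2 * m) := by
  induction m generalizing k with
  | zero => simp [Nat.stirlingFirst_self]
  | succ m ihm =>
    induction k with
    | zero => simp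
    | succ k ihk =>
      have ihm := ihm (k + 1)
      rw [show k + 1 + m = k + (m + 1) by ring] at ihm
      rw [two_pow_mul_factorial_mul_stirlingFirst_succ, show k + 1 + m = k + (m + 1) by ring,
        show k + 1 + (m + 1) = k + (m + 1) + 1 by ring]
      generalize k + (m + 1) = n at *
      calc _ ≤ n ^ (2 * (m + 1)) + 2 * (m + 1) * n * n ^ (2 * m) := by gcongr
        _ = n ^ (2 * (m + 1)) + (2 * (m + 1) : ℕ) * n ^ (2 * (m + 1) - 1) * 1 := by
          rw [show 2 * (m + 1) - 1 = 2 * m + 1 by lia]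
          ring
        _ ≤ (n + 1) ^ (2 * (m + 1)) := pow_add_mul_le_add_pow n.zero_le (Nat.zero_le _) _

theorem descFactorial_le_two_pow_mul_factorial_mul_stirlingFirst (m k : ℕ) :
    (k + m).descFactorial (2 * m) ≤ 2 ^ m * m ! * Nat.stirlingFirst (k + m) k := by
  induction m generalizing k with
  | zero => simp [Nat.stirlingFirst_self]
  | succ m ihm =>
    induction k with
    | zero => simp [Nat.descFactorial_of_lt (show m + 1 < 2 * (m + 1) by lia)]
    | succ k ihk =>
      have ihm := ihm (k + 1)
      rw [show k + 1 + m = k + (m + 1) by ring] at ihm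
      rw [two_pow_mul_factorial_mul_stirlingFirst_succ, show k + 1 + m = k + (m + 1) by ring,
        show k + 1 + (m + 1) = k + (m + 1) + 1 by ring]
      generalize k + (m + 1) = n at *
      calc (n + 1).descFactorial (2 * m + 1 + 1)
          = n.descFactorial (2 * (m + 1)) + 2 * (m + 1) * n.descFactorial (2 * m + 1) :=
            descFactorial_succ_succ_eq_add n (2 * m + 1)
        _ ≤ n.descFactorial (2 * (m + 1)) + 2 * (m + 1) * (n * n.descFactorial (2 * m)) := by
            gcongr
            rw [Nat.descFactorial_succ]
            gcongr
            exact Nat.sub_le n _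
        _ ≤ _ := by
            rw [← mul_assoc]
            gcongr

theorem stirlingFirst_sub_le {n m : ℕ} (hm : m ≤ n) :
    (Nat.stirlingFirst n (n - m) : ℝ) ≤ (1 / 2) ^ m * n ^ (2 * m) / m ! := by
  obtain ⟨k, rfl⟩ := Nat.exists_eq_add_of_le' hm
  have h : (2 ^ m * m ! * Nat.stirlingFirst (k + m) k : ℝ) ≤ (k + m : ℕ) ^ (2 * m) :=
    mod_cast two_pow_mul_factorial_mul_stirlingFirst_le_pow m k
  rw [Nat.add_sub_cancel, one_div_pow, one_div_mul_eq_div, div_div, le_div_iff₀' (by positivity)]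
  exact h

theorem tendsto_stirlingFirst_sub_div_pow (m : ℕ) :
    Tendsto (fun n : ℕ => (Nat.stirlingFirst n (n - m) : ℝ) / (n : ℝ) ^ (2 * m)) atTop
      (𝓝 ((1 / 2) ^ m / m !)) := by
  have lower := (tendsto_descFactorial_div_pow one_ne_zero 0 (2 * m)).mul_const
    ((1 / 2 : ℝ) ^ m / m !)
  simp only [one_mul, add_zero, Nat.cast_one, one_pow] at lower
  refine tendsto_of_tendsto_of_tendsto_of_le_of_le' lower tendsto_const_nhds ?_ ?_
  · filter_upwards [eventually_ge_atTop m, eventually_gt_atTop 0] with n hmn hn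
    obtain ⟨k, rfl⟩ := Nat.exists_eq_add_of_le' hmn
    have h : ((k + m).descFactorial (2 * m) : ℝ) ≤ 2 ^ m * m ! * Nat.stirlingFirst (k + m) k :=
      mod_cast descFactorial_le_two_pow_mul_factorial_mul_stirlingFirst m k
    rw [Nat.add_sub_cancel, div_mul_eq_mul_div]
    gcongr
    rwa [one_div_pow, div_div, mul_one_div, div_le_iff₀' (by positivity)]
  · filter_upwards [eventually_ge_atTop m, eventually_gt_atTop 0] with n hmn hn
    rw [div_le_iff₀ (by positivity), div_mul_eq_mul_div]
    exact stirlingFirst_sub_le hmn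

end StirlingNumbers

section FactorialGrowth

/-- `C k ~ γ (2k + ν)! S ^ k` as `k → ∞`, stated as convergence of the quotient so that it is
meaningful for `γ = 0`. -/
def HasFactorialGrowth (ν : ℕ) (S γ : ℝ) (C : ℕ → ℝ) : Prop :=
  Tendsto (fun k => C k / ((2 * k + ν)! * S ^ k)) atTop (𝓝 γ)

variable {ν : ℕ} {S γ : ℝ} {C : ℕ → ℝ}

theorem div_descFactorial_two_mul_le {x K : ℝ} {n i : ℕ} (hi : i ≤ n)
    (hx : x ≤ K * n ^ (2 * i)) (hK : 0 ≤ K) :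
    x / (2 * n + ν).descFactorial (2 * i) ≤ K * exp 2 ^ i := by
  have pow_le : (n : ℝ) ^ (2 * i) ≤ exp 2 ^ i * (2 * n + ν).descFactorial (2 * i) :=
    calc (n : ℝ) ^ (2 * i) ≤ ((2 * n + ν : ℕ) : ℝ) ^ (2 * i) := by gcongr; lia
      _ ≤ exp (2 * i : ℕ) * (2 * n + ν).descFactorial (2 * i) :=
        pow_le_exp_mul_descFactorial (by lia)
      _ = exp 2 ^ i * (2 * n + ν).descFactorial (2 * i) := by
        rw [← exp_nat_mul]
        push_cast
        rw [mul_comm (2 : ℝ)]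
  refine div_le_of_le_mul₀ (by positivity) (by positivity) (hx.trans ?_)
  rw [mul_assoc]
  gcongr

theorem mul_div_factorial_mul_pow_eq {n i : ℕ} (hi : i ≤ n) (w c : ℝ) :
    w * c / ((2 * n + ν)! * S ^ n) =
      w / (2 * n + ν).descFactorial (2 * i) / S ^ i *
        (c / ((2 * (n - i) + ν)! * S ^ (n - i))) := by
  have factorial_eq : ((2 * n + ν)! : ℝ) =
      (2 * (n - i) + ν)! * (2 * n + ν).descFactorial (2 * i) := by
    rw [← Nat.factorial_mul_descFactorial (by lia : 2 * i ≤ 2 * n + ν),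
      show 2 * n + ν - 2 * i = 2 * (n - i) + ν by lia]
    exact Nat.cast_mul _ _
  rw [factorial_eq, ← pow_sub_mul_pow S hi]
  ring

theorem tendsto_div_descFactorial_two_mul {w : ℕ → ℝ} {ω : ℝ} {i : ℕ}
    (hw : Tendsto (fun n : ℕ => w n / (n : ℝ) ^ (2 * i)) atTop (𝓝 ω)) :
    Tendsto (fun n : ℕ => w n / (2 * n + ν).descFactorial (2 * i)) atTop (𝓝 (ω / 4 ^ i)) := by
  have h := hw.div (tendsto_descFactorial_div_pow two_ne_zero ν (2 * i)) (by positivity)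
  rw [pow_mul, show ((2 : ℕ) : ℝ) ^ 2 = 4 by norm_num] at h
  refine h.congr' ?_
  filter_upwards [eventually_ne_atTop 0] with n hn
  exact div_div_div_cancel_right₀ (by positivity) _ _

-- Shifting the index from `n` to `n - i` costs a factor `(2n + ν)_{2i} S ^ i ~ (4 n² S) ^ i`, which
-- is compared with the weight `W n i ~ ω i * n ^ (2i)`; Tannery's theorem sums the quotients.
theorem HasFactorialGrowth.sum_weight_mul {W : ℕ → ℕ → ℝ} {ω : ℕ → ℝ} {K : ℝ}
    (hC : HasFactorialGrowth ν S γ C) (hK : 0 ≤ K)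
    (hW : ∀ n, ∀ i ≤ n, |W n i| ≤ K ^ i * n ^ (2 * i) / i !)
    (hω : ∀ i, Tendsto (fun n : ℕ => W n i / (n : ℝ) ^ (2 * i)) atTop (𝓝 (ω i))) :
    HasFactorialGrowth ν S ((∑' i, ω i / (4 * S) ^ i) * γ)
      (fun n => ∑ i ∈ Finset.range (n + 1), W n i * C (n - i)) := by
  obtain ⟨B, hB⟩ := (Metric.isBounded_range_of_tendsto _ hC).exists_norm_le
  rw [Set.forall_mem_range] at hB
  simp only [HasFactorialGrowth, Finset.sum_div, ← tsum_mul_right]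
  refine tendsto_sum_of_dominated_convergence
    (bound := fun i => (K * exp 2 / |S|) ^ i / i ! * B)
    (tendsto_finset_range.comp (tendsto_add_atTop_nat 1))
    ((summable_pow_div_factorial _).mul_right B) (fun i => ?_) (.of_forall fun n i hi => ?_)
  · rw [mul_pow, ← div_div]
    refine (((tendsto_div_descFactorial_two_mul (ν := ν) (hω i)).div_const (S ^ i)).mul
      (hC.comp (tendsto_sub_atTop_nat i))).congr' ?_
    filter_upwards [eventually_ge_atTop i] with n hn
    exact (mul_div_factorial_mul_pow_eq hn _ _).symm
  · have hi : i ≤ n := by simpa [Nat.lt_succ_iff] using hi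
    have weight_le : |W n i| / (2 * n + ν).descFactorial (2 * i) ≤ K ^ i / i ! * exp 2 ^ i :=
      div_descFactorial_two_mul_le hi ((hW n i hi).trans_eq (by ring)) (by positivity)
    rw [mul_div_factorial_mul_pow_eq hi, norm_mul, norm_div, norm_div, norm_pow, norm_eq_abs,
      norm_eq_abs, norm_eq_abs, Nat.abs_cast]
    calc _ ≤ K ^ i / i ! * exp 2 ^ i / |S| ^ i * B := by
          gcongr
          exact hB _
      _ = (K * exp 2 / |S|) ^ i / i ! * B := by ring

end FactorialGrowth

section GeneralizedFishburn

variable {M ν a b : ℕ} {f : ℤ → ℝ} {S γ : ℝ}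

theorem Df_eq_sum_sub (M : ℕ) (f : ℤ → ℝ) (ν a b n : ℕ) :
    Df M f ν a b n = (∑ i ∈ Finset.range (n + 1), n.choose i * (a : ℝ) ^ i * Cf M f ν (n - i)) /
      (b : ℝ) ^ n := by
  rw [Df, inv_mul_eq_div, ← Finset.sum_range_reflect]
  congr 1
  refine Finset.sum_congr rfl fun i hi => ?_
  have hi : i ≤ n := by simpa [Nat.lt_succ_iff] using hi
  rw [Nat.add_sub_cancel, Nat.choose_symm hi, Nat.sub_sub_self hi]

theorem xif_eq_sum_stirlingFirst (M : ℕ) (f : ℤ → ℝ) (ν a b n : ℕ) :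
    xif M f ν a b n =
      (∑ i ∈ Finset.range (n + 1), Nat.stirlingFirst n (n - i) * Df M f ν a b (n - i)) / n ! := by
  cases n with
  | zero => simp [xif]
  | succ n =>
    rw [Finset.sum_range_succ, Nat.sub_self, Nat.stirlingFirst_succ_zero]
    simp only [xif, stirling1_eq_stirlingFirst]
    ring

theorem tendsto_choose_mul_pow_div_pow (a : ℝ) (i : ℕ) :
    Tendsto (fun n : ℕ => n.choose i * a ^ i / (n : ℝ) ^ (2 * i)) atTop
      (𝓝 (if i = 0 then 1 else 0)) := by
  rcases eq_or_ne i 0 with rfl | hi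
  · simp
  rw [if_neg hi]
  have pow_tendsto : Tendsto (fun n : ℕ => |a| ^ i / (n : ℝ) ^ i) atTop (𝓝 0) :=
    ((tendsto_pow_atTop hi).comp tendsto_natCast_atTop_atTop).const_div_atTop _
  refine squeeze_zero_norm' ?_ pow_tendsto
  filter_upwards [eventually_ne_atTop 0] with n hn
  have choose_le : (n.choose i : ℝ) ≤ (n : ℝ) ^ i := mod_cast Nat.choose_le_pow n i
  rw [norm_div, norm_mul, norm_pow, norm_pow, norm_natCast, norm_natCast, norm_eq_abs,
    div_le_div_iff₀ (by positivity) (by positivity), two_mul, pow_add]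
  nlinarith [mul_le_mul_of_nonneg_right choose_le (by positivity : 0 ≤ |a| ^ i * (n : ℝ) ^ i)]

theorem hasFactorialGrowth_Df (hb : b ≠ 0) (hC : HasFactorialGrowth ν S γ (Cf M f ν)) :
    HasFactorialGrowth ν (S / b) γ (Df M f ν a b) := by
  have weight_le (n i : ℕ) (_ : i ≤ n) :
      |(n.choose i * (a : ℝ) ^ i : ℝ)| ≤ a ^ i * n ^ (2 * i) / i ! := by
    rw [abs_of_nonneg (by positivity), mul_comm, mul_div_assoc]
    gcongr
    refine (Nat.choose_le_pow_div i n).trans ?_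
    gcongr ?_ / _
    rw [pow_mul]
    exact mod_cast Nat.pow_le_pow_left (Nat.le_self_pow two_ne_zero n) i
  have h := hC.sum_weight_mul a.cast_nonneg weight_le (tendsto_choose_mul_pow_div_pow a)
  have tsum_eq : ∑' i : ℕ, (if i = 0 then (1 : ℝ) else 0) / (4 * S) ^ i = 1 := by
    rw [tsum_eq_single 0 fun i hi => by simp [hi]]
    simp
  rw [tsum_eq, one_mul] at h
  refine h.congr fun n => ?_
  rw [Df_eq_sum_sub, div_pow]
  field_simp

theorem hasFactorialGrowth_factorial_mul_xif
    (hD : HasFactorialGrowth ν S γ (Df M f ν a b)) :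
    HasFactorialGrowth ν S (exp (1 / (8 * S)) * γ) (fun n => n ! * xif M f ν a b n) := by
  have h := hD.sum_weight_mul (W := fun n i => Nat.stirlingFirst n (n - i)) one_half_pos.le
    (fun n i hi => (Nat.abs_cast _).trans_le (stirlingFirst_sub_le hi))
    tendsto_stirlingFirst_sub_div_pow
  have tsum_eq : ∑' i : ℕ, (1 / 2 : ℝ) ^ i / i ! / (4 * S) ^ i = exp (1 / (8 * S)) := by
    rw [exp_eq_exp_ℝ, NormedSpace.exp_eq_tsum_div]
    refine tsum_congr fun i => ?_
    rw [div_right_comm, ← div_pow]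
    congr 2
    ring
  rw [tsum_eq] at h
  refine h.congr fun n => ?_
  simp only [xif_eq_sum_stirlingFirst]
  field_simp

end GeneralizedFishburn

section FourierExpansion

theorem sum_Icc_one_eq_sum_range {α : Type*} [AddCancelCommMonoid α] {F : ℕ → α} {M : ℕ}
    (hF : F M = F 0) : ∑ m ∈ Finset.Icc 1 M, F m = ∑ m ∈ Finset.range M, F m := by
  rw [← Finset.Ico_add_one_right_eq_Icc, Finset.sum_Ico_eq_sum_range, Nat.add_sub_cancel,
    ← add_left_inj (F 0)]
  simp only [add_comm 1]
  rw [← Finset.sum_range_succ', Finset.sum_range_succ, hF]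

variable {M : ℕ} {f : ℤ → ℝ}

theorem Gf_one_eq_sum_Icc (hM : M ≠ 0) (hf : Function.Periodic f M) (k : ℕ) :
    Gf M f 1 k = 2 / √M * ∑ m ∈ Finset.Icc 1 M, f m * cos (2 * π * k * (m / M)) := by
  have arg_eq (m : ℕ) : 2 * π * m * k / M = 2 * π * k * (m / M) := by ring
  rw [Gf, if_neg one_ne_zero, sum_Icc_one_eq_sum_range]
  · simp only [arg_eq]
  · rw [div_self (mod_cast hM), mul_one, mul_comm (2 * π), cos_nat_mul_two_pi, hf.eq]
    simp

theorem abs_Gf_one_le (M : ℕ) (f : ℤ → ℝ) (k : ℕ) :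
    |Gf M f 1 k| ≤ 2 / √M * ∑ m ∈ Finset.range M, |f m| := by
  rw [Gf, if_neg one_ne_zero, abs_mul, abs_of_nonneg (by positivity)]
  gcongr
  refine (Finset.abs_sum_le_sum_abs _ _).trans (Finset.sum_le_sum fun m _ => ?_)
  rw [abs_mul]
  exact mul_le_of_le_one_right (abs_nonneg _) (abs_cos_le_one _)

theorem hasSum_cos_mul_div_pow {m n : ℕ} (hm : m ≤ M) :
    HasSum (fun k : ℕ => cos (2 * π * k * (m / M)) / (k : ℝ) ^ (2 * (n + 1)))
      ((-1) ^ n * (2 * π) ^ (2 * (n + 1)) / 2 / (2 * (n + 1))! *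
        ((Polynomial.bernoulli (2 * n + 1 + 1)).eval ((m : ℚ) / M) : ℚ)) := by
  have mem_Icc : (m : ℝ) / M ∈ Set.Icc (0 : ℝ) 1 :=
    ⟨by positivity, div_le_one_of_le₀ (mod_cast hm) M.cast_nonneg⟩
  have eval_eq : ((Polynomial.bernoulli (2 * (n + 1))).map (algebraMap ℚ ℝ)).eval ((m : ℝ) / M) =
      ((Polynomial.bernoulli (2 * n + 1 + 1)).eval ((m : ℚ) / M) : ℚ) := by
    rw [show (m : ℝ) / M = algebraMap ℚ ℝ (m / M) by simp, Polynomial.eval_map,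
      Polynomial.eval₂_at_apply]
    rfl
  have h := hasSum_one_div_nat_pow_mul_cos n.succ_ne_zero mem_Icc
  simpa only [n.succ_eq_add_one, eval_eq, one_div_mul_eq_div, pow_succ (-1 : ℝ), mul_neg_one,
    neg_neg] using h

theorem neg_mul_Cf_one_div_eq_sum_bernoulli (hM : M ≠ 0) (n : ℕ) :
    -((2 * π) ^ 2 / (M * √M)) * (Cf M f 1 n / ((2 * n + 1)! * ((M / (2 * π)) ^ 2) ^ n)) =
      2 / √M * ∑ m ∈ Finset.Icc 1 M, f m * ((-1) ^ n * (2 * π) ^ (2 * (n + 1)) / 2 /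
        (2 * (n + 1))! * ((Polynomial.bernoulli (2 * n + 1 + 1)).eval ((m : ℚ) / M) : ℚ)) := by
  simp only [Cf, mul_left_comm (f _), ← Finset.mul_sum]
  rw [show 2 * (n + 1) = 2 * n + 1 + 1 by ring, Nat.factorial_succ (2 * n + 1), div_pow, div_pow,
    ← pow_mul, ← pow_mul]
  push_cast
  field_simp
  ring

theorem hasSum_Gf_one_div_pow (hM : M ≠ 0) (hf : Function.Periodic f M) (n : ℕ) :
    HasSum (fun k : ℕ => Gf M f 1 k / (k : ℝ) ^ (2 * n + 2))
      (-((2 * π) ^ 2 / (M * √M)) *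
        (Cf M f 1 n / ((2 * n + 1)! * ((M / (2 * π)) ^ 2) ^ n))) := by
  have h := (hasSum_sum fun m (hm : m ∈ Finset.Icc 1 M) => (hasSum_cos_mul_div_pow (n := n)
    (Finset.mem_Icc.1 hm).2).mul_left (f m)).mul_left (2 / √M)
  rw [neg_mul_Cf_one_div_eq_sum_bernoulli hM]
  refine h.congr_fun fun k => ?_
  rw [Gf_one_eq_sum_Icc hM hf, mul_div_assoc, Finset.sum_div]
  simp only [mul_div_assoc, mul_add_one]

theorem hasFactorialGrowth_Cf_one (hM : M ≠ 0) (hf : Function.Periodic f M) :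
    HasFactorialGrowth 1 ((M / (2 * π)) ^ 2) (-(M * √M / (2 * π) ^ 2) * Gf M f 1 1)
      (Cf M f 1) := by
  have h := ((tendsto_tsum_div_pow_of_bounded (abs_Gf_one_le M f)).comp
    (tendsto_id.const_mul_atTop' zero_lt_two)).const_mul (-(M * √M / (2 * π) ^ 2))
  refine h.congr fun n => ?_
  rw [Function.comp_apply, id, (hasSum_Gf_one_div_pow hM hf n).tsum_eq]
  field_simp

theorem tendsto_xif_one_div (hM : M ≠ 0) (hf : Function.Periodic f M) (a : ℕ) {b : ℕ}
    (hb : b ≠ 0) :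
    Tendsto (fun n => xif M f 1 a b n / (n ! * √n * (M ^ 2 / (π ^ 2 * b)) ^ n)) atTop
      (𝓝 (-(M * √M / (2 * π ^ 2 * √π)) * Gf M f 1 1 * exp (π ^ 2 * b / (2 * M ^ 2)))) := by
  have growth := hasFactorialGrowth_factorial_mul_xif
    (hasFactorialGrowth_Df (a := a) hb (hasFactorialGrowth_Cf_one hM hf))
  have h := growth.mul tendsto_factorial_two_mul_add_one_div
  have exponent_eq : 1 / (8 * (((M : ℝ) / (2 * π)) ^ 2 / b)) = π ^ 2 * b / (2 * M ^ 2) := by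
    field_simp
    norm_num
  have base_eq : (M : ℝ) ^ 2 / (π ^ 2 * b) = 4 * ((M / (2 * π)) ^ 2 / b) := by
    field_simp
    norm_num
  rw [exponent_eq] at h
  convert h using 1
  · ext n
    rw [base_eq, mul_pow]
    field_simp
  · congr 1
    field_simp

end FourierExpansion

section ChiT

theorem chiT_periodic (t : ℕ) : Function.Periodic (chiT t) (3 * 2 ^ (t + 1) : ℕ) := by
  intro n
  have emod_eq : (n + (3 * 2 ^ (t + 1) : ℕ)) % (3 * 2 ^ (t + 1)) = n % (3 * 2 ^ (t + 1)) := by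
    push_cast
    exact Int.add_emod_right _ _
  simp only [chiT, emod_eq]

theorem chiT_natCast {t m : ℕ} (ht : 1 ≤ t) (hm : m < 3 * 2 ^ (t + 1)) :
    chiT t m =
      (if m = 2 * 2 ^ t + 3 then 1 / 2 else 0) + (if m = 4 * 2 ^ t - 3 then 1 / 2 else 0) +
        (if m = 2 * 2 ^ t - 3 then -(1 / 2) else 0) +
        (if m = 4 * 2 ^ t + 3 then -(1 / 2) else 0) := by
  have two_le_two_pow : 2 ≤ 2 ^ t := Nat.le_self_pow (by lia) 2
  -- Evenness keeps `2 * 2 ^ t + 3` and `4 * 2 ^ t - 3` apart.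
  have two_pow_even : 2 ∣ 2 ^ t := dvd_pow_self 2 (by lia)
  have cast_pow : (2 : ℤ) ^ t = (2 ^ t : ℕ) := by push_cast; rfl
  simp only [chiT, pow_succ, cast_pow] at hm ⊢
  generalize 2 ^ t = K at *
  rw [Int.emod_eq_of_lt (a := m), Int.emod_eq_of_lt (a := K * 2 - 3),
    Int.emod_eq_of_lt (a := K * 2 * 2 + 3), Int.emod_eq_of_lt (a := K * 2 + 3),
    Int.emod_eq_of_lt (a := K * 2 * 2 - 3)]
  · split_ifs <;> first | lia | norm_num
  all_goals lia

theorem sum_chiT_mul {t : ℕ} (ht : 1 ≤ t) (g : ℕ → ℝ) :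
    ∑ m ∈ Finset.range (3 * 2 ^ (t + 1)), chiT t m * g m =
      1 / 2 * (g (2 * 2 ^ t + 3) + g (4 * 2 ^ t - 3) - g (2 * 2 ^ t - 3) - g (4 * 2 ^ t + 3)) := by
  have two_le_two_pow : 2 ≤ 2 ^ t := Nat.le_self_pow (by lia) 2
  rw [Finset.sum_congr rfl fun m hm => by rw [chiT_natCast ht (Finset.mem_range.1 hm)]]
  simp only [add_mul, ite_mul, zero_mul, Finset.sum_add_distrib, Finset.sum_ite_eq',
    Finset.mem_range]
  rw [if_pos (by lia), if_pos (by lia), if_pos (by lia), if_pos (by lia)]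
  ring

theorem cos_two_pi_div_three_add_sub (x : ℝ) :
    cos (2 * π / 3 + x) - cos (2 * π / 3 - x) = -(√3 * sin x) := by
  have sin_eq : sin (2 * π / 3) = √3 / 2 := by
    rw [← sin_pi_div_three, ← sin_pi_sub]
    congr 1
    ring
  rw [cos_add, cos_sub, sin_eq]
  ring

theorem sum_chiT_mul_cos {t : ℕ} (ht : 1 ≤ t) :
    ∑ m ∈ Finset.range (3 * 2 ^ (t + 1)), chiT t m * cos (2 * π * m / (3 * 2 ^ (t + 1))) =
      -(√3 * sin (π / 2 ^ t)) := by
  have two_le_two_pow : 2 ≤ 2 ^ t := Nat.le_self_pow (by lia) 2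
  have angle_add : 2 * π * (2 * 2 ^ t + 3) / (3 * 2 ^ (t + 1)) = 2 * π / 3 + π / 2 ^ t := by
    field_simp
    ring
  have angle_sub : 2 * π * (2 * 2 ^ t - 3) / (3 * 2 ^ (t + 1)) = 2 * π / 3 - π / 2 ^ t := by
    field_simp
    ring
  have angle_reflect_add : 2 * π * (4 * 2 ^ t - 3) / (3 * 2 ^ (t + 1)) =
      2 * π - (2 * π / 3 + π / 2 ^ t) := by
    field_simp
    ring
  have angle_reflect_sub : 2 * π * (4 * 2 ^ t + 3) / (3 * 2 ^ (t + 1)) =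
      2 * π - (2 * π / 3 - π / 2 ^ t) := by
    field_simp
    ring
  rw [sum_chiT_mul ht fun m => cos (2 * π * m / (3 * 2 ^ (t + 1))), Nat.cast_sub (by lia),
    Nat.cast_sub (by lia)]
  push_cast
  rw [angle_add, angle_sub, angle_reflect_add, angle_reflect_sub, cos_two_pi_sub, cos_two_pi_sub,
    ← cos_two_pi_div_three_add_sub]
  ring

theorem Gf_chiT_one {t : ℕ} (ht : 1 ≤ t) :
    Gf (3 * 2 ^ (t + 1)) (chiT t) 1 1 =
      -(2 / √(3 * 2 ^ (t + 1) : ℕ) * (√3 * sin (π / 2 ^ t))) := by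
  rw [Gf, if_neg one_ne_zero, neg_mul_eq_mul_neg, ← sum_chiT_mul_cos ht]
  simp only [Nat.cast_one, mul_one]
  push_cast
  rfl

theorem sin_pi_div_two_pow_pos {t : ℕ} (ht : 1 ≤ t) : 0 < sin (π / 2 ^ t) :=
  sin_pos_of_pos_of_lt_pi (by positivity)
    (div_lt_self pi_pos (one_lt_pow₀ one_lt_two (by lia)))

theorem tendsto_xif_chiT_div {t : ℕ} (ht : 1 ≤ t) (a : ℕ) :
    Tendsto (fun n => xif (3 * 2 ^ (t + 1)) (chiT t) 1 a (3 * 2 ^ (t + 2)) n /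
        (n ! * √n * (3 * 2 ^ t / π ^ 2) ^ n)) atTop
      (𝓝 (2 * 3 ^ 2 * 2 ^ t / (√(3 * π) * π ^ 2) * sin (π / 2 ^ t) *
        exp (π ^ 2 / (3 * 2 ^ (t + 1))))) := by
  have h := tendsto_xif_one_div (by positivity) (chiT_periodic t) a
    (show 3 * 2 ^ (t + 2) ≠ 0 by positivity)
  have base_eq : ((3 * 2 ^ (t + 1) : ℕ) : ℝ) ^ 2 / (π ^ 2 * (3 * 2 ^ (t + 2) : ℕ)) =
      3 * 2 ^ t / π ^ 2 := by
    push_cast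
    field_simp
    ring
  have exponent_eq : π ^ 2 * (3 * 2 ^ (t + 2) : ℕ) / (2 * ((3 * 2 ^ (t + 1) : ℕ) : ℝ) ^ 2) =
      π ^ 2 / (3 * 2 ^ (t + 1)) := by
    push_cast
    field_simp
    ring
  rw [base_eq, exponent_eq, Gf_chiT_one ht] at h
  convert h using 3
  have sqrt_three_sq : √(3 : ℝ) ^ 2 = 3 := sq_sqrt zero_le_three
  rw [sqrt_mul zero_le_three]
  field_simp
  rw [sqrt_three_sq]
  push_cast
  ring

end ChiT

end

/-- The generalized Fishburn numbers `ξ_t(n)` (the coefficients of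
`𝓕_t(1−q)`, obtained from the construction with `f = χ_t`, `M = 3·2^(t+1)`, `ν = 1`,
`a = (2^(t+1)−3)²`, `b = 3·2^(t+2)`) satisfy
`ξ_t(n) ~ (sin(π/2^t)/(2^t √(3π))) (3·2^t/π)^(2n+2) 2^(2n+1) n! √n / (3·2^(t+2))^n
          · e^(π²/(3·2^(t+1)))` as `n → ∞`. -/
theorem generalized_fishburn_asymptotic (t : ℕ) (ht : 1 ≤ t) :
    Filter.Tendsto
      (fun n : ℕ =>
        xif (3 * 2 ^ (t + 1)) (chiT t) 1 ((2 ^ (t + 1) - 3) ^ 2) (3 * 2 ^ (t + 2)) n /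
          (Real.sin (Real.pi / 2 ^ t) / (2 ^ t * Real.sqrt (3 * Real.pi)) *
            ((3 * 2 ^ t : ℝ) / Real.pi) ^ (2 * n + 2) * 2 ^ (2 * n + 1) *
            (n.factorial : ℝ) * Real.sqrt n / (3 * 2 ^ (t + 2) : ℝ) ^ n *
            Real.exp (Real.pi ^ 2 / (3 * 2 ^ (t + 1)))))
      Filter.atTop (nhds 1) := by
  have limit := tendsto_xif_chiT_div ht ((2 ^ (t + 1) - 3) ^ 2)
  have sin_pos := sin_pi_div_two_pow_pos ht
  have normalized := limit.div_const (2 * 3 ^ 2 * 2 ^ t / (√(3 * Real.pi) * Real.pi ^ 2) *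
    Real.sin (Real.pi / 2 ^ t) * Real.exp (Real.pi ^ 2 / (3 * 2 ^ (t + 1))))
  rw [div_self (by positivity)] at normalized
  refine normalized.congr fun n => ?_
  have pow_eq : (3 * 2 ^ t / Real.pi ^ 2) ^ n =
      ((3 * 2 ^ t : ℝ) / Real.pi) ^ (2 * n) * 2 ^ (2 * n) / (3 * 2 ^ (t + 2) : ℝ) ^ n := by
    rw [pow_mul, pow_mul, ← mul_pow, ← div_pow]
    congr 1
    field_simp
    ring
  rw [div_div, pow_eq, pow_add _ (2 * n) 2, pow_add _ (2 * n) 1]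
  congr 1
  field_simp
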